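/- arXiv:2202.04026 — 3 statements merged into one kernel-verified Lean document; each statement's English description precedes it below -/
import Mathlib

section
/- Let X* ∈ S_n be a minimizer of a convex function g : 𝕊ⁿ → ℝ over S_n with rank(X*) = r*, and define the dual function q(Z,s) = inf_{X∈𝕊ⁿ} { g(X) + s·(1 − Tr(X)) − ⟨Z,X⟩ } for Z ∈ 𝕊ⁿ, s ∈ ℝ (values in ℝ ∪ {−∞}). Then for any δ > 0 the following are equivalent: (i) there exist Z* ∈ 𝕊ⁿ with Z* ⪰ 0 and s* ∈ ℝ such that q(Z*,s*) = g(X*) (i.e., (Z*,s*) is an optimal dual solution attaining the primal optimal value), rank(Z*) = n − r*, and λ_{n−r*}(Z*) ≥ δ; (ii) there exists G* ∈ ∂g(X*) such that ⟨X − X*, G*⟩ ≥ 0 for all X ∈ S_n and λ_{n−r*}(G*) − λ_n(G*) ≥ δ. -/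
open scoped BigOperators RealInnerProductSpace
open Matrix

noncomputable section

abbrev Mat (n : ℕ) := Matrix (Fin n) (Fin n) ℝ
abbrev Vec (m : ℕ) := EuclideanSpace ℝ (Fin m)

/-- Trace inner product `⟨A,B⟩ = Tr(AB)`. -/
def mip {n : ℕ} (A B : Mat n) : ℝ := (A * B).trace

/-- Frobenius norm. -/
def frob {n : ℕ} (A : Mat n) : ℝ := Real.sqrt (∑ i, ∑ j, (A i j) ^ 2)

/-- The set of symmetric `n × n` real matrices (the space `𝕊ⁿ`). -/
def SymM (n : ℕ) : Set (Mat n) := {X | X.IsSymm}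

/-- The spectrahedron `S_n`. -/
def Spectra (n : ℕ) : Set (Mat n) := {X | X.trace = 1 ∧ X.PosSemidef}

/-- `lam A k` : the `k`-th largest eigenvalue of a symmetric matrix `A` (1-indexed,
so `lam A 1 = λ₁(A)` is the largest and `lam A n = λₙ(A)` is the smallest);
junk value otherwise. -/
def lam {n : ℕ} (A : Mat n) (k : ℕ) : ℝ :=
  if h : k - 1 < n then
    if hA : A.IsHermitian then
      hA.eigenvalues (Tuple.sort hA.eigenvalues (Fin.rev ⟨k - 1, h⟩))
    else 0
  else 0

/-- Multiplicity of the smallest eigenvalue of `A`. -/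
def multMin {n : ℕ} (A : Mat n) : ℕ :=
  letI := Classical.decPred fun k : ℕ => lam A k = lam A n
  ((Finset.Icc 1 n).filter fun k => lam A k = lam A n).card

/-- Subdifferential of `g : 𝕊ⁿ → ℝ` at `X`. -/
def subdiff {n : ℕ} (g : Mat n → ℝ) (X : Mat n) : Set (Mat n) :=
  {G | G.IsSymm ∧ ∀ Y ∈ SymM n, g Y ≥ g X + mip G (Y - X)}

/-- Euclidean (Frobenius-norm) projection onto `C ⊆ 𝕊ⁿ`. -/
def mproj {n : ℕ} (C : Set (Mat n)) (X : Mat n) : Mat n :=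
  Classical.epsilon fun P => P ∈ C ∧ ∀ Q ∈ C, frob (X - P) ≤ frob (X - Q)

/-- Euclidean projection onto `C ⊆ ℝᵐ`. -/
def vproj {m : ℕ} (C : Set (Vec m)) (x : Vec m) : Vec m :=
  Classical.epsilon fun p => p ∈ C ∧ ∀ q ∈ C, ‖x - p‖ ≤ ‖x - q‖

/-- Norm on the product space `𝕊ⁿ × ℝᵐ`. -/
def pnorm {n m : ℕ} (X : Mat n) (y : Vec m) : ℝ := Real.sqrt (frob X ^ 2 + ‖y‖ ^ 2)

/-!
The two sides are exchanged by `G = Z + s • 1`, `s = λₙ(G)`. Since `Z` and `X*` are positive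
semidefinite, `⟨Z, X*⟩ ≥ 0`, so `q(Z, s) = g(X*)` says exactly that `⟨Z, X*⟩ = 0` and
`Z + s • 1 ∈ ∂g(X*)`. On the other side, `λₙ(G)` is the minimum of `⟨G, ·⟩` over the spectrahedron,
so the variational inequality says that `⟨G - λₙ(G) • 1, X*⟩ = 0`, where `G - λₙ(G) • 1 ⪰ 0`. The
shift moves all eigenvalues equally, and `⟨Z, X*⟩ = 0` forces `Z X* = 0`, hence
`rank Z ≤ n - rank X*`; the converse inequality is the positivity of `λ_{n - r*}(Z)`.
-/

section Matrices

open scoped ComplexOrder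

variable {ι : Type*} [Fintype ι]

theorem roots_charpoly_add_scalar {R : Type*} [CommRing R] [IsDomain R] [DecidableEq ι]
    (M : Matrix ι ι R) (c : R) :
    (M + scalar ι c).charpoly.roots = M.charpoly.roots.map (· + c) := by
  have hM : M.charpoly
      = (M + scalar ι c).charpoly.comp (Polynomial.C 1 * Polynomial.X + Polynomial.C c) := by
    rw [Polynomial.C_1, one_mul, ← charpoly_sub_scalar, add_sub_cancel_right]
  rw [hM, ← Polynomial.map_roots_comp_C_mul_X_add_C _ 1 c isUnit_one]
  simp only [one_mul]

theorem isHermitian_add_scalar [DecidableEq ι] {A : Matrix ι ι ℝ} (hA : A.IsHermitian)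
    (c : ℝ) : (A + scalar ι c).IsHermitian :=
  hA.add (isHermitian_diagonal _)

theorem countP_roots_charpoly [DecidableEq ι] {A : Matrix ι ι ℝ} (hA : A.IsHermitian)
    (p : ℝ → Prop) [DecidablePred p] :
    A.charpoly.roots.countP p = Finset.card {i | p (hA.eigenvalues i)} := by
  rw [hA.roots_charpoly_eq_eigenvalues, Multiset.countP_map]
  rfl

variable {𝕜 : Type*} [RCLike 𝕜]

theorem trace_conjTranspose_mul_self_mul_conjTranspose_mul_self (B C : Matrix ι ι 𝕜) :
    (Bᴴ * B * (Cᴴ * C)).trace = ((B * Cᴴ)ᴴ * (B * Cᴴ)).trace := by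
  rw [← Matrix.mul_assoc, trace_mul_comm, conjTranspose_mul, conjTranspose_conjTranspose]
  simp only [Matrix.mul_assoc]

open scoped MatrixOrder in
theorem exists_eq_conjTranspose_mul_self {A : Matrix ι ι 𝕜} (hA : A.PosSemidef) :
    ∃ B : Matrix ι ι 𝕜, A = Bᴴ * B := by
  classical exact CStarAlgebra.nonneg_iff_eq_star_mul_self.mp hA.nonneg

theorem trace_mul_nonneg {A B : Matrix ι ι 𝕜} (hA : A.PosSemidef) (hB : B.PosSemidef) :
    0 ≤ (A * B).trace := by
  obtain ⟨C, rfl⟩ := exists_eq_conjTranspose_mul_self hA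
  obtain ⟨D, rfl⟩ := exists_eq_conjTranspose_mul_self hB
  rw [trace_conjTranspose_mul_self_mul_conjTranspose_mul_self]
  exact (posSemidef_conjTranspose_mul_self _).trace_nonneg

theorem mul_eq_zero_of_trace_mul_eq_zero {A B : Matrix ι ι 𝕜} (hA : A.PosSemidef)
    (hB : B.PosSemidef) (h : (A * B).trace = 0) : A * B = 0 := by
  obtain ⟨C, rfl⟩ := exists_eq_conjTranspose_mul_self hA
  obtain ⟨D, rfl⟩ := exists_eq_conjTranspose_mul_self hB
  rw [trace_conjTranspose_mul_self_mul_conjTranspose_mul_self,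
    trace_conjTranspose_mul_self_eq_zero_iff] at h
  calc Cᴴ * C * (Dᴴ * D) = Cᴴ * (C * Dᴴ) * D := by simp only [Matrix.mul_assoc]
    _ = 0 := by rw [h, Matrix.mul_zero, Matrix.zero_mul]

theorem exists_posSemidef_trace_mul_eq_eigenvalues [DecidableEq ι] {A : Matrix ι ι 𝕜}
    (hA : A.IsHermitian) (i : ι) :
    ∃ P : Matrix ι ι 𝕜, P.PosSemidef ∧ P.trace = 1 ∧ (A * P).trace = hA.eigenvalues i := by
  let v : ι → 𝕜 := hA.eigenvectorBasis i
  have hv : v ⬝ᵥ star v = 1 := by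
    rw [← EuclideanSpace.inner_eq_star_dotProduct, inner_self_eq_norm_sq_to_K,
      hA.eigenvectorBasis.norm_eq_one]
    simp
  refine ⟨vecMulVec v (star v), posSemidef_vecMulVec_self_star v, ?_, ?_⟩
  · rw [trace_vecMulVec, hv]
  · rw [mul_vecMulVec, hA.mulVec_eigenvectorBasis i, trace_vecMulVec, smul_dotProduct, hv,
      RCLike.real_smul_eq_coe_mul, mul_one]

end Matrices

section SortedEigenvalues

variable {n : ℕ} {A : Mat n} {k : ℕ}

-- Counting eigenvalues with multiplicity makes `lam` independent of the order of `eigenvalues`.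
theorem le_lam_iff (hA : A.IsHermitian) (hk : k - 1 < n) {c : ℝ} :
    c ≤ lam A k ↔ k - 1 < A.charpoly.roots.countP (c ≤ ·) := by
  let σ : Equiv.Perm (Fin n) := Fin.revPerm.trans (Tuple.sort hA.eigenvalues)
  have hσ : Antitone (hA.eigenvalues ∘ σ) :=
    (Tuple.monotone_sort hA.eigenvalues).comp_antitone Fin.rev_anti
  have hlam : lam A k = (hA.eigenvalues ∘ σ) ⟨k - 1, hk⟩ := by
    rw [lam, dif_pos hk, dif_pos hA]
    rfl
  have hcount : A.charpoly.roots.countP (c ≤ ·)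
      = Finset.card {i | c ≤ (hA.eigenvalues ∘ σ) i} := by
    rw [countP_roots_charpoly hA]
    exact Finset.card_equiv σ.symm fun i ↦ by
      simp only [Finset.mem_filter_univ, Function.comp_apply, Equiv.apply_symm_apply]
  rw [hlam, hcount, ← Tuple.lt_card_ge_iff_apply_ge_of_antitone hσ]

theorem lam_add_scalar (hA : A.IsHermitian) (hk : k - 1 < n) (c : ℝ) :
    lam (A + scalar (Fin n) c) k = lam A k + c := by
  refine eq_of_forall_le_iff fun b ↦ ?_
  rw [le_lam_iff (isHermitian_add_scalar hA c) hk, ← sub_le_iff_le_add, le_lam_iff hA hk,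
    roots_charpoly_add_scalar, Multiset.countP_map, Multiset.countP_eq_card_filter]
  simp only [sub_le_iff_le_add]

theorem le_rank_of_lam_pos (hA : A.IsHermitian) (h : 0 < lam A k) : k ≤ A.rank := by
  have hk : k - 1 < n := by
    by_contra hk
    simp [lam, hk] at h
  have hcount : A.charpoly.roots.countP (lam A k ≤ ·) ≤ A.rank := by
    rw [countP_roots_charpoly hA, hA.rank_eq_card_non_zero_eigs, Fintype.card_subtype]
    exact Finset.card_le_card (Finset.monotone_filter_right _ fun i _ hi ↦ (h.trans_le hi).ne')
  have := (le_lam_iff hA hk).1 le_rfl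
  omega

theorem exists_eigenvalues_eq_lam (hA : A.IsHermitian) (hk : k - 1 < n) :
    ∃ i, hA.eigenvalues i = lam A k := by
  rw [lam, dif_pos hk, dif_pos hA]
  exact ⟨_, rfl⟩

theorem lam_self_le_eigenvalues (hA : A.IsHermitian) (i : Fin n) : lam A n ≤ hA.eigenvalues i := by
  have hn : n - 1 < n := by have := i.pos; omega
  have hle : Fin.rev ⟨n - 1, hn⟩ ≤ (Tuple.sort hA.eigenvalues).symm i := by
    rw [Fin.le_def, Fin.val_rev]
    dsimp only
    omega
  rw [lam, dif_pos hn, dif_pos hA]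
  simpa using Tuple.monotone_sort hA.eigenvalues hle

theorem posSemidef_of_lam_self_nonneg (hA : A.IsHermitian) (h : 0 ≤ lam A n) : A.PosSemidef :=
  hA.posSemidef_iff_eigenvalues_nonneg.2 fun i ↦ h.trans (lam_self_le_eigenvalues hA i)

theorem lam_nonneg (hA : A.PosSemidef) : 0 ≤ lam A k := by
  by_cases hk : k - 1 < n
  · obtain ⟨i, hi⟩ := exists_eigenvalues_eq_lam hA.1 hk
    exact hi ▸ hA.eigenvalues_nonneg i
  · simp [lam, hk]

end SortedEigenvalues

section Spectrahedron

variable {n : ℕ} {G X Z : Mat n}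

theorem mip_comm (A B : Mat n) : mip A B = mip B A :=
  trace_mul_comm A B

theorem mip_sub (A B C : Mat n) : mip A (B - C) = mip A B - mip A C := by
  simp only [mip, Matrix.mul_sub, trace_sub]

theorem mip_add_scalar (A B : Mat n) (c : ℝ) :
    mip (A + scalar (Fin n) c) B = mip A B + c * B.trace := by
  rw [mip, mip, Matrix.add_mul, trace_add, scalar_apply, ← smul_one_eq_diagonal,
    Matrix.smul_mul, Matrix.one_mul, trace_smul, smul_eq_mul]

theorem mem_symM_of_mem_spectra (hX : X ∈ Spectra n) : X ∈ SymM n :=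
  isHermitian_iff_isSymm.1 hX.2.1

theorem pos_of_mem_spectra (hX : X ∈ Spectra n) : 0 < n := by
  refine Nat.pos_of_ne_zero ?_
  rintro rfl
  exact zero_ne_one ((trace_fin_zero X).symm.trans hX.1)

theorem posSemidef_add_scalar_neg_lam_self (hn : 0 < n) (hG : G.IsHermitian) :
    (G + scalar (Fin n) (-lam G n)).PosSemidef := by
  refine posSemidef_of_lam_self_nonneg (isHermitian_add_scalar hG _) ?_
  rw [lam_add_scalar hG (Nat.sub_one_lt_of_lt hn), add_neg_cancel]

theorem isLeast_mip_image_spectra (hn : 0 < n) (hG : G.IsHermitian) :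
    IsLeast (mip G '' Spectra n) (lam G n) := by
  constructor
  · obtain ⟨i, hi⟩ := exists_eigenvalues_eq_lam hG (Nat.sub_one_lt_of_lt hn)
    obtain ⟨P, hP, htr, hGP⟩ := exists_posSemidef_trace_mul_eq_eigenvalues hG i
    exact ⟨P, ⟨htr, hP⟩, hGP.trans hi⟩
  · rintro _ ⟨X, hX, rfl⟩
    have h : 0 ≤ mip (G + scalar (Fin n) (-lam G n)) X :=
      trace_mul_nonneg (posSemidef_add_scalar_neg_lam_self hn hG) hX.2
    rw [mip_add_scalar, hX.1] at h
    linarith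

theorem forall_spectra_mip_sub_nonneg_iff (hG : G.IsHermitian) (hX : X ∈ Spectra n) :
    (∀ Y ∈ Spectra n, mip (Y - X) G ≥ 0) ↔ mip G X = lam G n := by
  have hleast := isLeast_mip_image_spectra (pos_of_mem_spectra hX) hG
  simp only [mip_comm _ G, mip_sub, ge_iff_le, sub_nonneg]
  rw [← Set.forall_mem_image (f := mip G) (p := (mip G X ≤ ·))]
  exact ⟨fun h ↦ IsLeast.unique ⟨Set.mem_image_of_mem _ hX, h⟩ hleast, fun h ↦ h ▸ hleast.2⟩

theorem lam_self_eq_zero_of_mip_eq_zero (hZ : Z.PosSemidef) (hX : X ∈ Spectra n)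
    (h : mip Z X = 0) : lam Z n = 0 :=
  le_antisymm
    (h ▸ (isLeast_mip_image_spectra (pos_of_mem_spectra hX) hZ.1).2 (Set.mem_image_of_mem _ hX))
    (lam_nonneg hZ)

theorem rank_eq_of_mip_eq_zero (hZ : Z.PosSemidef) (hX : X.PosSemidef) (h : mip Z X = 0)
    (hpos : 0 < lam Z (n - X.rank)) : Z.rank = n - X.rank := by
  have hle := rank_add_rank_le_card_of_mul_eq_zero (mul_eq_zero_of_trace_mul_eq_zero hZ hX h)
  rw [Fintype.card_fin] at hle
  exact le_antisymm (Nat.le_sub_of_add_le hle) (le_rank_of_lam_pos hZ.1 hpos)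

end Spectrahedron

section Duality

variable {n : ℕ} {g : Mat n → ℝ} {X Z : Mat n} {s : ℝ}

/-- The Lagrange dual function `q(Z, s)` of minimizing `g` over the spectrahedron, where `Z` is the
multiplier of `X ⪰ 0` and `s` that of `Tr X = 1`. It is `EReal`-valued, so that an unbounded
infimum is `-∞` rather than a junk real number. -/
def dualFunction (g : Mat n → ℝ) (Z : Mat n) (s : ℝ) : EReal :=
  sInf ((fun X => ((g X + s * (1 - X.trace) - mip Z X : ℝ) : EReal)) '' SymM n)

theorem dualFunction_eq_iff (hZ : Z.PosSemidef) (hX : X ∈ Spectra n) :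
    dualFunction g Z s = g X ↔ mip Z X = 0 ∧ Z + scalar (Fin n) s ∈ subdiff g X := by
  have hXsymm := mem_symM_of_mem_spectra hX
  have hZX : 0 ≤ mip Z X := trace_mul_nonneg hZ hX.2
  have hsub (Y : Mat n) (h : mip Z X = 0) :
      g X ≤ g Y + s * (1 - Y.trace) - mip Z Y ↔
        g Y ≥ g X + mip (Z + scalar (Fin n) s) (Y - X) := by
    rw [mip_add_scalar, mip_sub, trace_sub, hX.1, h, ge_iff_le]
    constructor <;> intro <;> linarith
  constructor
  · intro hq
    have hle : ∀ Y ∈ SymM n, g X ≤ g Y + s * (1 - Y.trace) - mip Z Y := fun Y hY ↦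
      EReal.coe_le_coe_iff.1 (hq ▸ sInf_le (Set.mem_image_of_mem _ hY))
    have h0 : mip Z X = 0 := by
      have := hle X hXsymm
      rw [hX.1] at this
      linarith
    exact ⟨h0, isHermitian_iff_isSymm.1 (isHermitian_add_scalar hZ.1 s),
      fun Y hY ↦ (hsub Y h0).1 (hle Y hY)⟩
  · rintro ⟨h0, -, hG⟩
    refine IsLeast.csInf_eq ⟨⟨X, hXsymm, by simp [hX.1, h0]⟩, ?_⟩
    rintro _ ⟨Y, hY, rfl⟩
    exact EReal.coe_le_coe_iff.2 ((hsub Y h0).2 (hG Y hY))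

end Duality

theorem stmt_0_general {n : ℕ} {g : Mat n → ℝ} {Xs : Mat n} (hXsS : Xs ∈ Spectra n)
    {rs : ℕ} (hrank : Xs.rank = rs) {δ : ℝ} (hδ : 0 < δ) :
    (∃ (Z : Mat n) (s : ℝ), Z.PosSemidef ∧ dualFunction g Z s = g Xs ∧
        Z.rank = n - rs ∧ lam Z (n - rs) ≥ δ) ↔
    (∃ G ∈ subdiff g Xs, (∀ X ∈ Spectra n, mip (X - Xs) G ≥ 0) ∧
        lam G (n - rs) - lam G n ≥ δ) := by
  subst hrank
  have hn := pos_of_mem_spectra hXsS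
  constructor
  · rintro ⟨Z, s, hZ, hq, -, hlam⟩
    obtain ⟨hZX, hG⟩ := (dualFunction_eq_iff hZ hXsS).1 hq
    have hZn := lam_self_eq_zero_of_mip_eq_zero hZ hXsS hZX
    have hGh := isHermitian_add_scalar hZ.1 s
    refine ⟨_, hG, (forall_spectra_mip_sub_nonneg_iff hGh hXsS).2 ?_, ?_⟩
    · rw [mip_add_scalar, hZX, hXsS.1, lam_add_scalar hZ.1 (by omega), hZn, mul_one]
    · rw [lam_add_scalar hZ.1 (by omega), lam_add_scalar hZ.1 (by omega), hZn]
      linarith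
  · rintro ⟨G, hG, hopt, hlam⟩
    have hGh : G.IsHermitian := isHermitian_iff_isSymm.2 hG.1
    have hZ := posSemidef_add_scalar_neg_lam_self hn hGh
    have hGX := (forall_spectra_mip_sub_nonneg_iff hGh hXsS).1 hopt
    have hZX : mip (G + scalar (Fin n) (-lam G n)) Xs = 0 := by
      rw [mip_add_scalar, hXsS.1, hGX, mul_one, add_neg_cancel]
    have hZlam : lam (G + scalar (Fin n) (-lam G n)) (n - Xs.rank) ≥ δ := by
      rwa [lam_add_scalar hGh (by omega), ← sub_eq_add_neg]
    refine ⟨_, lam G n, hZ, (dualFunction_eq_iff hZ hXsS).2 ⟨hZX, ?_⟩,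
      rank_eq_of_mip_eq_zero hZ hXsS.2 hZX (hδ.trans_le hZlam), hZlam⟩
    rwa [add_assoc, ← map_add, neg_add_cancel, map_zero, add_zero]

theorem stmt_0 {n : ℕ} (hn : 2 ≤ n) (g : Mat n → ℝ)
    (hg : ConvexOn ℝ (SymM n) g)
    (Xs : Mat n) (hXsS : Xs ∈ Spectra n)
    (hmin : ∀ X ∈ Spectra n, g Xs ≤ g X)
    (rs : ℕ) (hrank : Xs.rank = rs)
    (δ : ℝ) (hδ : 0 < δ) :
    (∃ (Z : Mat n) (s : ℝ), Z.PosSemidef ∧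
        sInf ((fun X => ((g X + s * (1 - X.trace) - mip Z X : ℝ) : EReal)) '' SymM n)
          = ((g Xs : ℝ) : EReal) ∧
        Z.rank = n - rs ∧ lam Z (n - rs) ≥ δ) ↔
    (∃ G ∈ subdiff g Xs, (∀ X ∈ Spectra n, mip (X - Xs) G ≥ 0) ∧
        lam G (n - rs) - lam G n ≥ δ) :=
  stmt_0_general hXsS hrank hδ
end
end

section
/- Consider the sparse-PCA objective g(X) = −⟨ zz^⊤ + z⊥z⊥^⊤, X ⟩ + (1/(2k))‖X‖₁ with 1 ≤ k ≤ n/4. Let 0 < η < 2/3 and let v ∈ ℝⁿ be any unit vector (‖v‖₂ = 1) supported on the first k coordinates (v_i = 0 for i > k) with ‖vv^⊤ − zz^⊤‖_F² ≤ 1/k². Then G = −zz^⊤ − z⊥z⊥^⊤ + (1/(2k))·sign(vv^⊤) is a subgradient of g at vv^⊤ (G ∈ ∂g(vv^⊤)), and the projected subgradient step from vv^⊤ increases the rank: rank( Π_{S_n}[ vv^⊤ − η G ] ) ≥ 2. -/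
open scoped BigOperators RealInnerProductSpace
open Matrix

noncomputable section

/-!
Closeness of `vvᵀ` to `zzᵀ` forces all entries of `v` on its support to be nonzero with a common
sign, so `sign(vvᵀ) = k zzᵀ` and the subgradient step lands at
`M = vvᵀ + (η/2) zzᵀ + η z⊥z⊥ᵀ`. If the projection of `M` onto the spectrahedron were a rank-one
matrix `uuᵀ`, then `uuᵀ` would maximise `⟪M - uuᵀ, ·⟫` there. Since `v` and `z` are orthogonal
to `z⊥`, comparing with `z⊥z⊥ᵀ` and Bessel's inequality gives `u = ±z⊥`, and then comparing with
`vvᵀ` gives `η ≥ 2`.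
-/

section RankOne

lemma exists_eq_vecMulVec_of_rank_le_one {m n K : Type*} [Fintype n] [Field K] {A : Matrix m n K}
    (hA : A.rank ≤ 1) : ∃ b c, A = vecMulVec b c := by
  classical
  obtain ⟨b, hb⟩ := finrank_le_one_iff.1 hA
  choose c hc using fun j ↦ hb ⟨A.mulVecLin (Pi.single j 1), LinearMap.mem_range_self _ _⟩
  refine ⟨b, c, ?_⟩
  ext i j
  have hij := congrFun (congrArg Subtype.val (hc j)) i
  simpa [vecMulVec_apply, mul_comm] using hij.symm

variable {ι : Type*} [Fintype ι]

-- A rank-one matrix `bcᵀ` of trace one is idempotent, so if it is also symmetric it equals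
-- `(bcᵀ)(bcᵀ)ᵀ = ‖c‖² bbᵀ`.
lemma exists_eq_vecMulVec_self_of_rank_le_one {P : Matrix ι ι ℝ} (hsymm : P.IsSymm)
    (htrace : P.trace = 1) (hrank : P.rank ≤ 1) :
    ∃ u : ι → ℝ, u ⬝ᵥ u = 1 ∧ P = vecMulVec u u := by
  obtain ⟨b, c, rfl⟩ := exists_eq_vecMulVec_of_rank_le_one hrank
  rw [trace_vecMulVec] at htrace
  have hc : 0 ≤ c ⬝ᵥ c := Finset.sum_nonneg fun _ _ ↦ mul_self_nonneg _
  have hself : vecMulVec b c = (c ⬝ᵥ c) • vecMulVec b b := calc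
    vecMulVec b c = vecMulVec b c * vecMulVec b c := by
      rw [vecMulVec_mul_vecMulVec, dotProduct_comm c b, htrace, one_smul]
    _ = vecMulVec b c * vecMulVec c b := by
      nth_rw 2 [← hsymm.eq]
      rw [transpose_vecMulVec]
    _ = (c ⬝ᵥ c) • vecMulVec b b := by
      rw [vecMulVec_mul_vecMulVec, vecMulVec_smul]
  have hP : vecMulVec b c = vecMulVec (√(c ⬝ᵥ c) • b) (√(c ⬝ᵥ c) • b) := by
    rw [smul_vecMulVec, vecMulVec_smul, smul_smul, Real.mul_self_sqrt hc, hself]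
  refine ⟨√(c ⬝ᵥ c) • b, ?_, hP⟩
  rw [← trace_vecMulVec, ← hP, trace_vecMulVec, htrace]

lemma sq_dotProduct_add_sq_dotProduct_le {v w : ι → ℝ} (hv : v ⬝ᵥ v = 1) (hw : w ⬝ᵥ w = 1)
    (hvw : v ⬝ᵥ w = 0) (u : ι → ℝ) : (u ⬝ᵥ v) ^ 2 + (u ⬝ᵥ w) ^ 2 ≤ u ⬝ᵥ u := by
  have hres : 0 ≤ (u - (u ⬝ᵥ v) • v - (u ⬝ᵥ w) • w) ⬝ᵥ (u - (u ⬝ᵥ v) • v - (u ⬝ᵥ w) • w) :=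
    Finset.sum_nonneg fun _ _ ↦ mul_self_nonneg _
  simp only [sub_dotProduct, dotProduct_sub, smul_dotProduct, dotProduct_smul, hv, hw, hvw,
    dotProduct_comm w v, dotProduct_comm v u, dotProduct_comm w u, smul_eq_mul] at hres
  linarith

end RankOne

section Frobenius

variable {n : ℕ}

attribute [local instance] Matrix.frobeniusNormedAddCommGroup Matrix.frobeniusNormedSpace

lemma frob_eq_norm (A : Mat n) : frob A = ‖A‖ := by
  simp only [frob, frobenius_norm_def, Real.sqrt_eq_rpow, Real.rpow_two, Real.norm_eq_abs, sq_abs]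

lemma frob_sq (A : Mat n) : frob A ^ 2 = ∑ i, ∑ j, A i j ^ 2 :=
  Real.sq_sqrt (by positivity)

/-- The inner product `⟪A, B⟫ = Tr(Aᵀ B)` inducing the Frobenius norm, which makes Mathlib's
projection theory in Hilbert spaces available for `mproj`. -/
@[reducible]
def frobeniusInnerProductSpace (n : ℕ) : InnerProductSpace ℝ (Mat n) where
  inner A B := (Aᵀ * B).trace
  norm_sq_eq_re_inner A := by
    rw [← frob_eq_norm, frob_sq, Finset.sum_comm]
    simp [trace, mul_apply, sq]
  conj_inner_symm A B := by
    rw [← trace_transpose]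
    simp
  add_left A B C := by simp [add_mul]
  smul_left A B r := by simp

attribute [local instance] frobeniusInnerProductSpace

lemma inner_vecMulVec_vecMulVec (a b c d : Fin n → ℝ) :
    ⟪(vecMulVec a b : Mat n), vecMulVec c d⟫ = (a ⬝ᵥ c) * (b ⬝ᵥ d) := by
  change ((vecMulVec a b)ᵀ * vecMulVec c d).trace = _
  rw [transpose_vecMulVec, vecMulVec_mul_vecMulVec, trace_vecMulVec, dotProduct_smul, smul_eq_mul]

lemma mproj_mem_and_norm_eq_iInf {C : Set (Mat n)} (hne : C.Nonempty) (hclosed : IsClosed C)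
    (hconv : Convex ℝ C) (X : Mat n) :
    mproj C X ∈ C ∧ ‖X - mproj C X‖ = ⨅ Q : C, ‖X - Q‖ := by
  have : Nonempty C := hne.to_subtype
  have hbdd : BddBelow (Set.range fun Q : C ↦ ‖X - Q‖) :=
    ⟨0, Set.forall_mem_range.2 fun _ ↦ norm_nonneg _⟩
  obtain ⟨P, hP, hmin⟩ :=
    exists_norm_eq_iInf_of_complete_convex hne hclosed.isComplete hconv X
  have hex : ∃ P, P ∈ C ∧ ∀ Q ∈ C, frob (X - P) ≤ frob (X - Q) :=
    ⟨P, hP, fun Q hQ ↦ by simpa only [frob_eq_norm, hmin] using ciInf_le hbdd ⟨Q, hQ⟩⟩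
  obtain ⟨hmem, hle⟩ : mproj C X ∈ C ∧ ∀ Q ∈ C, frob (X - mproj C X) ≤ frob (X - Q) :=
    Classical.epsilon_spec hex
  refine ⟨hmem, le_antisymm (le_ciInf fun Q ↦ ?_) (ciInf_le hbdd ⟨_, hmem⟩)⟩
  simpa only [frob_eq_norm] using hle Q Q.2

lemma inner_sub_mproj_le_zero {C : Set (Mat n)} (hclosed : IsClosed C)
    (hconv : Convex ℝ C) (X : Mat n) {Q : Mat n} (hQ : Q ∈ C) :
    ⟪X - mproj C X, Q - mproj C X⟫ ≤ 0 := by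
  obtain ⟨hmem, hmin⟩ := mproj_mem_and_norm_eq_iInf ⟨Q, hQ⟩ hclosed hconv X
  exact (norm_eq_iInf_iff_real_inner_le_zero hconv hmem).1 hmin Q hQ

lemma convex_spectra (n : ℕ) : Convex ℝ (Spectra n) := by
  intro P hP R hR a b ha hb hab
  refine ⟨?_, (hP.2.smul ha).add (hR.2.smul hb)⟩
  simp [hP.1, hR.1, hab]

lemma isClosed_spectra (n : ℕ) : IsClosed (Spectra n) := by
  have hSpectra : Spectra n = {X | X.trace = 1} ∩ ({X | Xᵀ = X} ∩
      ⋂ x : Fin n → ℝ, {X | 0 ≤ x ⬝ᵥ (X *ᵥ x)}) := by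
    ext X
    simp only [Spectra, Set.mem_ofPred_eq, Set.mem_inter_iff, Set.mem_iInter,
      posSemidef_iff_dotProduct_mulVec, IsHermitian, conjTranspose_eq_transpose_of_trivial,
      star_trivial]
  rw [hSpectra]
  exact (isClosed_eq (by fun_prop) (by fun_prop)).inter <|
    (isClosed_eq (by fun_prop) (by fun_prop)).inter <|
      isClosed_iInter fun x ↦ isClosed_le (by fun_prop) (by fun_prop)

lemma vecMulVec_self_mem_spectra {w : Fin n → ℝ} (hw : w ⬝ᵥ w = 1) :
    vecMulVec w w ∈ Spectra n :=
  ⟨by rw [trace_vecMulVec, hw], by simpa using posSemidef_vecMulVec_self_star w⟩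

lemma exists_forall_inner_sub_le_of_rank_mproj_le_one (hne : (Spectra n).Nonempty) {M : Mat n}
    (hrank : (mproj (Spectra n) M).rank ≤ 1) :
    ∃ u : Fin n → ℝ, u ⬝ᵥ u = 1 ∧ ∀ x : Fin n → ℝ, x ⬝ᵥ x = 1 →
      ⟪M, vecMulVec x x⟫ - (u ⬝ᵥ x) ^ 2 ≤ ⟪M, vecMulVec u u⟫ - 1 := by
  obtain ⟨⟨htrace, hpsd⟩, -⟩ :=
    mproj_mem_and_norm_eq_iInf hne (isClosed_spectra n) (convex_spectra n) M
  obtain ⟨u, hu, hproj⟩ := exists_eq_vecMulVec_self_of_rank_le_one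
    (by simpa using hpsd.isHermitian) htrace hrank
  refine ⟨u, hu, fun x hx ↦ ?_⟩
  have hvar := inner_sub_mproj_le_zero (isClosed_spectra n) (convex_spectra n) M
    (vecMulVec_self_mem_spectra hx)
  simp only [hproj, inner_sub_left, inner_sub_right, inner_vecMulVec_vecMulVec, hu] at hvar
  linarith

theorem two_le_rank_mproj_spectra {v z w : Fin n → ℝ} (hv : v ⬝ᵥ v = 1) (hz : z ⬝ᵥ z = 1)
    (hw : w ⬝ᵥ w = 1) (hvw : v ⬝ᵥ w = 0) (hzw : z ⬝ᵥ w = 0) {α β : ℝ} (hα : 0 ≤ α) (hαβ : α < β)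
    (hβ : β < 2) :
    2 ≤ (mproj (Spectra n) (vecMulVec v v + α • vecMulVec z z + β • vecMulVec w w)).rank := by
  by_contra! hrank
  obtain ⟨u, hu, hmax⟩ := exists_forall_inner_sub_le_of_rank_mproj_le_one
    ⟨_, vecMulVec_self_mem_spectra hv⟩ (Nat.le_of_lt_succ hrank)
  simp only [inner_add_left, real_inner_smul_left, inner_vecMulVec_vecMulVec, ← sq,
    dotProduct_comm _ u] at hmax
  have hmax_w := hmax w hw
  have hmax_v := hmax v hv
  simp only [hw, hvw, hzw, dotProduct_comm w v, hv] at hmax_w hmax_v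
  have hbessel_v := hu ▸ sq_dotProduct_add_sq_dotProduct_le hv hw hvw u
  have hbessel_z := hu ▸ sq_dotProduct_add_sq_dotProduct_le hz hw hzw u
  have huw : 1 ≤ (u ⬝ᵥ w) ^ 2 := by
    nlinarith [mul_le_mul_of_nonneg_left hbessel_z hα]
  have huw_eq : (u ⬝ᵥ w) ^ 2 = 1 := by linarith [sq_nonneg (u ⬝ᵥ v)]
  have huv : (u ⬝ᵥ v) ^ 2 = 0 := by linarith [sq_nonneg (u ⬝ᵥ v)]
  have huz : (u ⬝ᵥ z) ^ 2 = 0 := by linarith [sq_nonneg (u ⬝ᵥ z)]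
  rw [huw_eq, huv, huz] at hmax_v
  linarith [mul_nonneg hα (sq_nonneg (z ⬝ᵥ v))]

end Frobenius

section Subgradient

variable {n : ℕ}

lemma abs_add_sign_mul_sub_le_abs (x y : ℝ) : |x| + Real.sign x * (y - x) ≤ |y| := by
  rcases lt_trichotomy x 0 with hx | rfl | hx
  · rw [Real.sign_of_neg hx, abs_of_neg hx]
    linarith [neg_abs_le y]
  · simp
  · rw [Real.sign_of_pos hx, abs_of_pos hx]
    linarith [le_abs_self y]

lemma sum_abs_add_mip_sign_le_sum_abs {X : Mat n} (hX : X.IsSymm) (Y : Mat n) :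
    ∑ i, ∑ j, |X i j| + mip (X.map Real.sign) (Y - X) ≤ ∑ i, ∑ j, |Y i j| := by
  have hmip : mip (X.map Real.sign) (Y - X) = ∑ i, ∑ j, Real.sign (X i j) * (Y i j - X i j) := by
    rw [mip, ← trace_transpose, transpose_mul, ← transpose_map, hX.eq, Finset.sum_comm]
    simp [trace, mul_apply, mul_comm]
  rw [hmip, ← Finset.sum_add_distrib]
  simp only [← Finset.sum_add_distrib]
  gcongr
  exact abs_add_sign_mul_sub_le_abs _ _

lemma smul_sign_sub_mem_subdiff {A X : Mat n} (hA : A.IsSymm) (hX : X.IsSymm) {c : ℝ}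
    (hc : 0 ≤ c) :
    c • X.map Real.sign - A ∈ subdiff (fun Y ↦ -(mip A Y) + c * ∑ i, ∑ j, |Y i j|) X := by
  refine ⟨((hX.map _).smul c).sub hA, fun Y _ ↦ ?_⟩
  have hlinear : mip (c • X.map Real.sign - A) (Y - X) =
      c * mip (X.map Real.sign) (Y - X) - mip A Y + mip A X := by
    simp only [mip, sub_mul, mul_sub, smul_mul, trace_sub, trace_smul, smul_eq_mul]
    ring
  have hl1 := mul_le_mul_of_nonneg_left (sum_abs_add_mip_sign_le_sum_abs hX Y) hc
  dsimp only
  linarith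

end Subgradient

section SparsePCA

open Finset

/-- The indicator vector of `s` scaled to unit Euclidean norm: the `z` of the paper for the first
`k` coordinates, and its `z⊥` for the remaining ones. It is `0` for `s = ∅`. -/
def unitIndicator {ι : Type*} [DecidableEq ι] (s : Finset ι) (i : ι) : ℝ :=
  if i ∈ s then 1 / √(#s : ℝ) else 0

section UnitIndicator

variable {ι : Type*} [DecidableEq ι] {s : Finset ι}

lemma unitIndicator_mul_unitIndicator {i j : ι} (hi : i ∈ s) (hj : j ∈ s) :
    unitIndicator s i * unitIndicator s j = 1 / #s := by
  rw [unitIndicator, unitIndicator, if_pos hi, if_pos hj, div_mul_div_comm, one_mul,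
    Real.mul_self_sqrt (Nat.cast_nonneg _)]

variable [Fintype ι]

lemma unitIndicator_dotProduct_self (hs : s.Nonempty) :
    unitIndicator s ⬝ᵥ unitIndicator s = 1 := calc
  unitIndicator s ⬝ᵥ unitIndicator s = ∑ i ∈ s, unitIndicator s i * unitIndicator s i :=
    (sum_subset (subset_univ s) fun i _ hi ↦ by simp [unitIndicator, hi]).symm
  _ = ∑ _i ∈ s, (1 / #s : ℝ) := sum_congr rfl fun i hi ↦ unitIndicator_mul_unitIndicator hi hi
  _ = 1 := by
    have hcard : (#s : ℝ) ≠ 0 := by exact_mod_cast hs.card_ne_zero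
    rw [sum_const, nsmul_eq_mul, mul_one_div_cancel hcard]

lemma dotProduct_unitIndicator_compl {v : ι → ℝ} (hsupp : ∀ i ∉ s, v i = 0) :
    v ⬝ᵥ unitIndicator sᶜ = 0 :=
  sum_eq_zero fun i _ ↦ by
    by_cases hi : i ∈ s
    · simp [unitIndicator, hi]
    · simp [hsupp i hi]

end UnitIndicator

variable {n : ℕ} {s : Finset (Fin n)} {v : Fin n → ℝ}

lemma sq_add_sq_le_frob_sq (A : Mat n) {p q : Fin n × Fin n} (hpq : p ≠ q) :
    A p.1 p.2 ^ 2 + A q.1 q.2 ^ 2 ≤ frob A ^ 2 := by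
  rw [frob_sq, ← Fintype.sum_prod_type' fun i j ↦ A i j ^ 2,
    ← sum_pair (f := fun p : Fin n × Fin n ↦ A p.1 p.2 ^ 2) hpq]
  exact sum_le_sum_of_subset_of_nonneg (subset_univ _) fun _ _ _ ↦ sq_nonneg _

-- The entries `(i, j)` and `(j, i)` both contribute `(vᵢ vⱼ - 1 / #s)²` to the squared distance.
lemma mul_pos_of_frob_sq_le {i j : Fin n} (hij : i ≠ j) (hi : i ∈ s) (hj : j ∈ s)
    (hclose : frob (vecMulVec v v - vecMulVec (unitIndicator s) (unitIndicator s)) ^ 2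
      ≤ 1 / (#s : ℝ) ^ 2) :
    0 < v i * v j := by
  have hentries := (sq_add_sq_le_frob_sq _
    (p := (i, j)) (q := (j, i)) fun h ↦ hij (congrArg Prod.fst h)).trans hclose
  simp only [Matrix.sub_apply, vecMulVec_apply, unitIndicator_mul_unitIndicator hi hj,
    unitIndicator_mul_unitIndicator hj hi, mul_comm (v j)] at hentries
  have hcard : 0 < 1 / (#s : ℝ) := by
    have := card_pos.2 ⟨i, hi⟩
    positivity
  rw [← _root_.one_div_pow] at hentries
  nlinarith

lemma ne_zero_of_frob_sq_le (hv : v ≠ 0) (hsupp : ∀ i ∉ s, v i = 0)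
    (hclose : frob (vecMulVec v v - vecMulVec (unitIndicator s) (unitIndicator s)) ^ 2
      ≤ 1 / (#s : ℝ) ^ 2) {i : Fin n} (hi : i ∈ s) :
    v i ≠ 0 := by
  intro hvi
  refine hv (funext fun j ↦ ?_)
  rcases eq_or_ne i j with rfl | hij
  · exact hvi
  · refine hsupp j fun hj ↦ ?_
    simpa [hvi] using mul_pos_of_frob_sq_le hij hi hj hclose

lemma map_sign_vecMulVec_self (hv : v ≠ 0) (hsupp : ∀ i ∉ s, v i = 0)
    (hclose : frob (vecMulVec v v - vecMulVec (unitIndicator s) (unitIndicator s)) ^ 2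
      ≤ 1 / (#s : ℝ) ^ 2) :
    (vecMulVec v v).map Real.sign =
      (#s : ℝ) • vecMulVec (unitIndicator s) (unitIndicator s) := by
  ext i j
  simp only [map_apply, Matrix.smul_apply, vecMulVec_apply, smul_eq_mul]
  by_cases hi : i ∈ s
  · by_cases hj : j ∈ s
    · have hpos : 0 < v i * v j := by
        rcases eq_or_ne i j with rfl | hij
        · exact mul_self_pos.2 (ne_zero_of_frob_sq_le hv hsupp hclose hi)
        · exact mul_pos_of_frob_sq_le hij hi hj hclose
      have hcard : (#s : ℝ) ≠ 0 := by exact_mod_cast card_ne_zero_of_mem hi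
      rw [Real.sign_of_pos hpos, unitIndicator_mul_unitIndicator hi hj,
        mul_one_div_cancel hcard]
    · simp [hsupp j hj, unitIndicator, hj]
  · simp [hsupp i hi, unitIndicator, hi]

/-- The sparse PCA objective `g`, with the first `k` coordinates replaced by an arbitrary
set `s` of coordinates. -/
def sparsePCAObjective (s : Finset (Fin n)) (X : Mat n) : ℝ :=
  -(mip (vecMulVec (unitIndicator s) (unitIndicator s)
      + vecMulVec (unitIndicator sᶜ) (unitIndicator sᶜ)) X)
    + (1 / (2 * (#s : ℝ))) * ∑ i, ∑ j, |X i j|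

/-- The subgradient `G` of `sparsePCAObjective s` at `vvᵀ` that takes `sign 0 = 0`. -/
def sparsePCASubgradient (s : Finset (Fin n)) (v : Fin n → ℝ) : Mat n :=
  -(vecMulVec (unitIndicator s) (unitIndicator s))
    - vecMulVec (unitIndicator sᶜ) (unitIndicator sᶜ)
    + (1 / (2 * (#s : ℝ))) • (vecMulVec v v).map Real.sign

lemma sparsePCASubgradient_mem_subdiff (s : Finset (Fin n)) (v : Fin n → ℝ) :
    sparsePCASubgradient s v ∈ subdiff (sparsePCAObjective s) (vecMulVec v v) := by
  have hsymm (w : Fin n → ℝ) : (vecMulVec w w).IsSymm := transpose_vecMulVec w w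
  convert! smul_sign_sub_mem_subdiff ((hsymm (unitIndicator s)).add (hsymm (unitIndicator sᶜ)))
    (hsymm v) (by positivity : 0 ≤ 1 / (2 * (#s : ℝ))) using 1
  rw [sparsePCASubgradient]
  abel

lemma vecMulVec_sub_smul_sparsePCASubgradient (hs : s.Nonempty)
    (hsign : (vecMulVec v v).map Real.sign =
      (#s : ℝ) • vecMulVec (unitIndicator s) (unitIndicator s)) (η : ℝ) :
    vecMulVec v v - η • sparsePCASubgradient s v =
      vecMulVec v v + (η / 2) • vecMulVec (unitIndicator s) (unitIndicator s)
        + η • vecMulVec (unitIndicator sᶜ) (unitIndicator sᶜ) := by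
  have hcard : (#s : ℝ) ≠ 0 := by exact_mod_cast hs.card_ne_zero
  rw [sparsePCASubgradient, hsign, smul_smul,
    show 1 / (2 * (#s : ℝ)) * #s = 1 / 2 by field_simp]
  module

theorem stmt_4_general (hsc : sᶜ.Nonempty) (hv : v ⬝ᵥ v = 1) (hsupp : ∀ i ∉ s, v i = 0)
    (hclose : frob (vecMulVec v v - vecMulVec (unitIndicator s) (unitIndicator s)) ^ 2
      ≤ 1 / (#s : ℝ) ^ 2) {η : ℝ} (hη0 : 0 < η) (hη : η < 2) :
    sparsePCASubgradient s v ∈ subdiff (sparsePCAObjective s) (vecMulVec v v) ∧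
    2 ≤ (mproj (Spectra n) (vecMulVec v v - η • sparsePCASubgradient s v)).rank := by
  have hv0 : v ≠ 0 := by
    rintro rfl
    simp at hv
  have hs : s.Nonempty := by
    obtain ⟨i, hi⟩ := Function.ne_iff.1 hv0
    exact ⟨i, by_contra fun his ↦ hi (hsupp i his)⟩
  refine ⟨sparsePCASubgradient_mem_subdiff s v, ?_⟩
  rw [vecMulVec_sub_smul_sparsePCASubgradient hs (map_sign_vecMulVec_self hv0 hsupp hclose)]
  exact two_le_rank_mproj_spectra hv (unitIndicator_dotProduct_self hs)
    (unitIndicator_dotProduct_self hsc) (dotProduct_unitIndicator_compl hsupp)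
    (dotProduct_unitIndicator_compl fun i hi ↦ if_neg hi) (by positivity) (half_lt_self hη0) hη

end SparsePCA

theorem stmt_4 {n k : ℕ} (hn : 4 ≤ n) (hk : 1 ≤ k) (hkn : 4 * k ≤ n)
    (z zp : Fin n → ℝ)
    (hz : ∀ i : Fin n, z i = if (i : ℕ) < k then 1 / Real.sqrt (k : ℝ) else 0)
    (hzp : ∀ i : Fin n, zp i = if (i : ℕ) < k then 0 else 1 / Real.sqrt ((n : ℝ) - (k : ℝ)))
    (g : Mat n → ℝ)
    (hgdef : ∀ X : Mat n, g X = -(mip (vecMulVec z z + vecMulVec zp zp) X)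
        + (1 / (2 * (k : ℝ))) * ∑ i, ∑ j, |X i j|)
    (η : ℝ) (hη0 : 0 < η) (hη : η < 2 / 3)
    (v : Fin n → ℝ) (hvnorm : Real.sqrt (∑ i, (v i) ^ 2) = 1)
    (hsupp : ∀ i : Fin n, k ≤ (i : ℕ) → v i = 0)
    (hclose : frob (vecMulVec v v - vecMulVec z z) ^ 2 ≤ 1 / (k : ℝ) ^ 2)
    (G : Mat n)
    (hGdef : G = -(vecMulVec z z) - vecMulVec zp zp
        + (1 / (2 * (k : ℝ))) • Matrix.of (fun i j => Real.sign (vecMulVec v v i j))) :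
    G ∈ subdiff g (vecMulVec v v) ∧
    2 ≤ (mproj (Spectra n) (vecMulVec v v - η • G)).rank := by
  let s : Finset (Fin n) := {i | (i : ℕ) < k}
  have hcard : s.card = k := by rw [Fin.card_filter_val_lt, min_eq_right (by lia)]
  have hcard_compl : (sᶜ.card : ℝ) = n - k := by
    rw [Finset.card_compl, hcard, Fintype.card_fin, Nat.cast_sub (by lia)]
  have hsc : sᶜ.Nonempty := by
    rw [← Finset.card_pos, Finset.card_compl, hcard, Fintype.card_fin]
    lia
  have hv : v ⬝ᵥ v = 1 := by simpa [dotProduct, sq] using Real.sqrt_eq_one.1 hvnorm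
  obtain rfl : z = unitIndicator s := funext fun i ↦ by simp [hz, unitIndicator, hcard, s]
  obtain rfl : zp = unitIndicator sᶜ := funext fun i ↦ by
    rw [hzp, unitIndicator, hcard_compl]
    by_cases hi : (i : ℕ) < k <;> simp [s, hi]
  obtain rfl : g = sparsePCAObjective s := funext fun X ↦ by
    rw [hgdef, sparsePCAObjective, hcard]
  obtain rfl : G = sparsePCASubgradient s v := by
    rw [hGdef, sparsePCASubgradient, hcard]
    rfl
  rw [← hcard] at hclose
  exact stmt_4_general hsc hv (fun i hi ↦ hsupp i (by simpa [s] using hi)) hclose hη0 (by linarith)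
end
end

section
/- Suppose g(X) = h(X) + max_{y∈K} ⟨y, 𝒜(X) − b⟩ where h : 𝕊ⁿ → ℝ is convex and differentiable, 𝒜 : 𝕊ⁿ → ℝᵐ is linear, b ∈ ℝᵐ, and K ⊆ ℝᵐ is nonempty, compact and convex; set f(X,y) = h(X) + ⟨y, 𝒜(X) − b⟩. If X* is a minimizer of g over S_n and G* ∈ ∂g(X*) satisfies ⟨X − X*, G*⟩ ≥ 0 for all X ∈ S_n, then there exists y* ∈ argmax_{y∈K} f(X*,y) such that (X*,y*) is a saddle point of min_{X∈S_n} max_{y∈K} f(X,y) and ∇_X f(X*,y*) = G* (where ∇_X f(X,y) = ∇h(X) + 𝒜^⊤(y), with 𝒜^⊤ the adjoint of 𝒜). -/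
open scoped BigOperators RealInnerProductSpace
open Matrix

noncomputable section

/-!
The function `f - ⟨G, ·⟩` is convex-concave and its partial maximum `g - ⟨G, ·⟩` is minimised over
`𝕊ⁿ` at `X*`, because `G ∈ ∂g(X*)`. Sion's theorem on a compact convex neighbourhood of `X*` gives
`y*` such that `X*` is a local, hence by convexity a global, minimiser of `f(·, y*) - ⟨G, ·⟩`, and
`y*` maximises `f(X*, ·)`. So `G` is a subgradient of `f(·, y*)` at `X*`: subtracting the linear
part gives `G - 𝒜ᵀy* ∈ ∂h(X*)`, and the first-order condition on `G` gives the saddle point.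
-/

section FiniteDimensional

variable {E : Type*} [AddCommGroup E] [Module ℝ E] [TopologicalSpace E] [IsTopologicalAddGroup E]
  [ContinuousSMul ℝ E] [T2Space E]

lemma continuous_of_convexOn_univ [FiniteDimensional ℝ E] {h : E → ℝ}
    (hh : ConvexOn ℝ Set.univ h) : Continuous h := by
  let e : E ≃L[ℝ] _ := toEuclidean
  have h_coord : ConvexOn ℝ Set.univ (h ∘ e.symm) := hh.comp_linearMap e.symm.toLinearMap
  simpa [Function.comp_def] using h_coord.locallyLipschitz.continuous.comp e.continuous

lemma continuousOn_of_convexOn_submodule (V : Submodule ℝ E) [FiniteDimensional ℝ V] {h : E → ℝ}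
    (hh : ConvexOn ℝ V h) : ContinuousOn h V := by
  rw [continuousOn_iff_continuous_domRestrict]
  have hpre : V.subtype ⁻¹' (V : Set E) = Set.univ := Set.eq_univ_of_forall Subtype.property
  exact continuous_of_convexOn_univ (E := V) (hpre ▸ hh.comp_linearMap V.subtype)

lemma exists_mem_nhds_isCompact_convex [FiniteDimensional ℝ E] (x : E) :
    ∃ B ∈ nhds x, IsCompact B ∧ Convex ℝ B := by
  refine ⟨Euclidean.closedBall x 1, Euclidean.closedBall_mem_nhds one_pos,
    Euclidean.isCompact_closedBall, ?_⟩
  rw [Euclidean.closedBall_eq_preimage]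
  exact (convex_closedBall _ _).linear_preimage toEuclidean.toLinearMap

end FiniteDimensional

section Minimax

variable {E F : Type*}
  [AddCommGroup E] [Module ℝ E] [TopologicalSpace E] [IsTopologicalAddGroup E]
  [ContinuousSMul ℝ E] [T2Space E] [FiniteDimensional ℝ E]
  [AddCommGroup F] [Module ℝ F] [TopologicalSpace F] [IsTopologicalAddGroup F]
  [ContinuousSMul ℝ F]
  {C : Set E} {K : Set F} {f : E → F → ℝ} {g : E → ℝ} {x₀ : E}

lemma exists_isSaddlePointOn_of_isMinOn_isLUB
    (hCcv : Convex ℝ C) (hCcl : IsClosed C) (hKcv : Convex ℝ K) (hKcp : IsCompact K)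
    (hf_lsc : ∀ y ∈ K, LowerSemicontinuousOn (fun x => f x y) C)
    (hf_convex : ∀ y ∈ K, ConvexOn ℝ C (fun x => f x y))
    (hf_usc : ∀ x ∈ C, UpperSemicontinuousOn (f x) K)
    (hf_quasiconcave : ∀ x ∈ C, QuasiconcaveOn ℝ K (f x))
    (hg : ∀ x ∈ C, IsLUB (f x '' K) (g x)) (hx₀ : x₀ ∈ C) (hmin : IsMinOn g C x₀) :
    ∃ y₀ ∈ K, IsSaddlePointOn C K f x₀ y₀ := by
  obtain ⟨B, hB_nhds, hB_compact, hB_convex⟩ := exists_mem_nhds_isCompact_convex x₀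
  have hCB : C ∩ B ⊆ C := Set.inter_subset_left
  have hx₀B : x₀ ∈ C ∩ B := ⟨hx₀, mem_of_mem_nhds hB_nhds⟩
  have hCB_convex : Convex ℝ (C ∩ B) := hCcv.inter hB_convex
  obtain ⟨a, ha, y₀, hy₀, hsaddle⟩ := Sion.exists_isSaddlePointOn ⟨x₀, hx₀B⟩ hCB_convex
    (hB_compact.inter_left hCcl) (fun y hy => (hf_lsc y hy).mono hCB)
    (fun y hy => ((hf_convex y hy).subset hCB hCB_convex).quasiconvexOn)
    hKcv (hg x₀ hx₀).nonempty.of_image hKcp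
    (fun x hx => hf_usc x (hCB hx)) (fun x hx => hf_quasiconcave x (hCB hx))
  have hg_le : ∀ x ∈ C ∩ B, g x₀ ≤ f x y₀ := fun x hx =>
    calc g x₀ ≤ g a := hmin ha.1
      _ ≤ f x y₀ := (hg a ha.1).2 (Set.forall_mem_image.2 (hsaddle x hx))
  have hle_g : ∀ y ∈ K, f x₀ y ≤ g x₀ := fun y hy => (hg x₀ hx₀).1 (Set.mem_image_of_mem _ hy)
  have hlocal : IsLocalMinOn (fun x => f x y₀) C x₀ := by
    filter_upwards [nhdsWithin_le_nhds hB_nhds, self_mem_nhdsWithin] with x hxB hxC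
    exact (hle_g y₀ hy₀).trans (hg_le x ⟨hxC, hxB⟩)
  have hglobal : IsMinOn (fun x => f x y₀) C x₀ :=
    .of_isLocalMinOn_of_convexOn hx₀ hlocal (hf_convex y₀ hy₀)
  exact ⟨y₀, hy₀, fun x hx y hy => (hle_g y hy).trans ((hg_le x₀ hx₀B).trans (hglobal hx))⟩

end Minimax

section Subgradient

variable {E : Type*} [AddCommGroup E] [Module ℝ E]

/-- The linear functional `ℓ` is a subgradient at `x` of `φ` restricted to `C`. The functional is
not required to be continuous, and `x` is not required to lie in `C`. -/
def IsSubgradientOn (φ : E → ℝ) (C : Set E) (x : E) (ℓ : E →ₗ[ℝ] ℝ) : Prop :=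
  ∀ z ∈ C, φ x + ℓ (z - x) ≤ φ z

lemma isSubgradientOn_iff_isMinOn_sub {φ : E → ℝ} {C : Set E} {x : E} {ℓ : E →ₗ[ℝ] ℝ} :
    IsSubgradientOn φ C x ℓ ↔ IsMinOn (fun z => φ z - ℓ z) C x := by
  refine forall₂_congr fun z _ => ?_
  simp only [map_sub, Set.mem_ofPred_eq]
  constructor <;> intro <;> linarith

variable [TopologicalSpace E] [IsTopologicalAddGroup E] [ContinuousSMul ℝ E] [T2Space E]
  [FiniteDimensional ℝ E]

lemma exists_isMaxOn_isSubgradientOn_of_isLUB {F : Type*}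
    [AddCommGroup F] [Module ℝ F] [TopologicalSpace F] [IsTopologicalAddGroup F]
    [ContinuousSMul ℝ F] {C : Set E} {K : Set F} {f : E → F → ℝ} {g : E → ℝ} {x₀ : E}
    {ℓ : E →ₗ[ℝ] ℝ} (hCcv : Convex ℝ C) (hCcl : IsClosed C) (hKcv : Convex ℝ K)
    (hKcp : IsCompact K)
    (hf_lsc : ∀ y ∈ K, LowerSemicontinuousOn (fun x => f x y) C)
    (hf_convex : ∀ y ∈ K, ConvexOn ℝ C (fun x => f x y))
    (hf_usc : ∀ x ∈ C, UpperSemicontinuousOn (f x) K)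
    (hf_quasiconcave : ∀ x ∈ C, QuasiconcaveOn ℝ K (f x))
    (hg : ∀ x ∈ C, IsLUB (f x '' K) (g x)) (hx₀ : x₀ ∈ C) (hℓ : IsSubgradientOn g C x₀ ℓ) :
    ∃ y₀ ∈ K, IsMaxOn (f x₀) K y₀ ∧ IsSubgradientOn (fun x => f x y₀) C x₀ ℓ := by
  have hℓ_cont : Continuous ℓ := ℓ.continuous_of_finiteDimensional
  obtain ⟨y₀, hy₀, hsaddle⟩ := exists_isSaddlePointOn_of_isMinOn_isLUB
    (f := fun x y => f x y - ℓ x) hCcv hCcl hKcv hKcp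
    (fun y hy => by
      simpa only [sub_eq_add_neg] using!
        (hf_lsc y hy).add (hℓ_cont.neg.lowerSemicontinuous.lowerSemicontinuousOn C))
    (fun y hy => (hf_convex y hy).sub (ℓ.concaveOn hCcv))
    (fun x hx => by
      simpa only [sub_eq_add_neg] using (hf_usc x hx).add upperSemicontinuousOn_const)
    (fun x hx r => by
      simpa only [le_sub_iff_add_le] using hf_quasiconcave x hx (r + ℓ x))
    (fun x hx => by
      simpa only [Set.image_image, OrderIso.subRight_apply] using
        (OrderIso.subRight (ℓ x)).isLUB_image'.2 (hg x hx))
    hx₀ (isSubgradientOn_iff_isMinOn_sub.1 hℓ)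
  refine ⟨y₀, hy₀, fun y hy => ?_,
    isSubgradientOn_iff_isMinOn_sub.2 fun x hx => hsaddle x hx y₀ hy₀⟩
  exact (sub_le_sub_iff_right (ℓ x₀)).1 (hsaddle x₀ hx₀ y hy)

end Subgradient

section AffineCoupling

variable {E F : Type*} [AddCommGroup E] [Module ℝ E]
  [NormedAddCommGroup F] [InnerProductSpace ℝ F]

lemma isLUB_image_const_add_inner {K : Set F} (hKne : K.Nonempty) (hKcp : IsCompact K)
    (c : ℝ) (v : F) :
    IsLUB ((fun y => c + ⟪y, v⟫) '' K) (c + sSup ((fun y => ⟪y, v⟫) '' K)) := by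
  have hcont : Continuous fun y : F => ⟪y, v⟫ := by fun_prop
  have hLUB := isLUB_csSup (hKne.image _) (hKcp.image hcont).bddAbove
  simpa only [Set.image_image, OrderIso.addLeft_apply] using
    (OrderIso.addLeft c).isLUB_image'.2 hLUB

lemma convexOn_add_inner_map_sub {C : Set E} {h : E → ℝ} (hh : ConvexOn ℝ C h) (A : E →ₗ[ℝ] F)
    (b y : F) : ConvexOn ℝ C (fun x => h x + ⟪y, A x - b⟫) := by
  simp only [inner_sub_right]
  exact hh.add (((innerₗ F y ∘ₗ A).convexOn hh.1).sub (concaveOn_const ⟪y, b⟫ hh.1))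

lemma isSubgradientOn_add_inner_map_sub_iff {C : Set E} {h : E → ℝ} {A : E →ₗ[ℝ] F} {b y : F}
    {x : E} {ℓ : E →ₗ[ℝ] ℝ} :
    IsSubgradientOn (fun z => h z + ⟪y, A z - b⟫) C x ℓ ↔
      IsSubgradientOn h C x (ℓ - innerₗ F y ∘ₗ A) := by
  refine forall₂_congr fun z _ => ?_
  simp only [LinearMap.sub_apply, LinearMap.comp_apply, innerₗ_apply_apply, map_sub,
    inner_sub_right]
  constructor <;> intro <;> linarith

variable [TopologicalSpace E] [IsTopologicalAddGroup E] [ContinuousSMul ℝ E] [T2Space E]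
  [FiniteDimensional ℝ E]

lemma exists_isMaxOn_isSubgradientOn_add_inner {V : Submodule ℝ E} {K : Set F}
    (hKne : K.Nonempty) (hKcp : IsCompact K) (hKcv : Convex ℝ K) {h : E → ℝ}
    (hh : ConvexOn ℝ V h) (A : E →ₗ[ℝ] F) (b : F) {x₀ : E} (hx₀ : x₀ ∈ V) {ℓ : E →ₗ[ℝ] ℝ}
    (hℓ : IsSubgradientOn (fun x => h x + sSup ((fun y => ⟪y, A x - b⟫) '' K)) V x₀ ℓ) :
    ∃ y₀ ∈ K, IsMaxOn (fun y => h x₀ + ⟪y, A x₀ - b⟫) K y₀ ∧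
      IsSubgradientOn (fun x => h x + ⟪y₀, A x - b⟫) V x₀ ℓ := by
  have hA : Continuous A := A.continuous_of_finiteDimensional
  have hh_cont : ContinuousOn h V := continuousOn_of_convexOn_submodule V hh
  refine exists_isMaxOn_isSubgradientOn_of_isLUB (f := fun x y => h x + ⟪y, A x - b⟫)
    V.convex V.closed_of_finiteDimensional hKcv hKcp
    (fun y _ => ContinuousOn.lowerSemicontinuousOn (by fun_prop))
    (fun y _ => convexOn_add_inner_map_sub hh A b y)
    (fun x _ => ContinuousOn.upperSemicontinuousOn (by fun_prop))
    (fun x _ => ConcaveOn.quasiconcaveOn ?_)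
    (fun x _ => isLUB_image_const_add_inner hKne hKcp _ _) hx₀ hℓ
  simpa only [add_comm] using! (((innerₗ F).flip (A x - b)).concaveOn hKcv).add_const (h x)

end AffineCoupling

section SymmetricMatrices

variable {n : ℕ}

/-- The space `𝕊ⁿ` as a linear subspace of the square matrices. -/
def symSubmodule (n : ℕ) : Submodule ℝ (Mat n) where
  carrier := SymM n
  zero_mem' := Matrix.isSymm_zero
  add_mem' := Matrix.IsSymm.add
  smul_mem' c _ hX := Matrix.IsSymm.smul hX c

/-- The linear functional `⟨G, ·⟩` of the trace inner product. -/
def mipLinear (G : Mat n) : Mat n →ₗ[ℝ] ℝ :=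
  Matrix.traceLinearMap (Fin n) ℝ ℝ ∘ₗ LinearMap.mulLeft ℝ G

lemma mem_subdiff_iff {g : Mat n → ℝ} {X G : Mat n} :
    G ∈ subdiff g X ↔ G.IsSymm ∧ IsSubgradientOn g (symSubmodule n) X (mipLinear G) :=
  Iff.rfl

lemma mip_sub_left (G H X : Mat n) : mip (G - H) X = mip G X - mip H X := by
  simp only [mip, Matrix.sub_mul, Matrix.trace_sub]

lemma Spectra_subset_SymM : Spectra n ⊆ SymM n := fun _ hX => hX.2.isHermitian

end SymmetricMatrices

theorem stmt_7_general {n m : ℕ}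
    (K : Set (Vec m)) (hKne : K.Nonempty) (hKcp : IsCompact K) (hKcv : Convex ℝ K)
    (h0 : Mat n → ℝ) (hh0 : ConvexOn ℝ (SymM n) h0)
    (A : Mat n →ₗ[ℝ] Vec m) (b : Vec m)
    (Aadj : Vec m → Mat n) (hAs : ∀ y : Vec m, (Aadj y).IsSymm)
    (hAadj : ∀ X ∈ SymM n, ∀ y : Vec m, ⟪A X, y⟫ = mip (Aadj y) X)
    (g : Mat n → ℝ)
    (hgdef : ∀ X : Mat n, g X = h0 X + sSup ((fun y => ⟪y, A X - b⟫) '' K))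
    (f : Mat n → Vec m → ℝ) (hfdef : ∀ (X : Mat n) (y : Vec m), f X y = h0 X + ⟪y, A X - b⟫)
    (S : Set (Mat n)) (hS : S ⊆ SymM n)
    (Xs : Mat n) (hXs : Xs ∈ SymM n)
    (G : Mat n) (hG : G ∈ subdiff g Xs)
    (hfo : ∀ X ∈ S, mip (X - Xs) G ≥ 0) :
    ∃ ys ∈ K, (∀ y ∈ K, f Xs y ≤ f Xs ys) ∧
      (∀ X ∈ S, ∀ y ∈ K, f Xs y ≤ f Xs ys ∧ f Xs ys ≤ f X ys) ∧
      G - Aadj ys ∈ subdiff h0 Xs := by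
  obtain rfl : g = _ := funext hgdef
  obtain rfl : f = _ := funext₂ hfdef
  obtain ⟨hG_symm, hG_sub⟩ := mem_subdiff_iff.1 hG
  obtain ⟨ys, hys, hmax, hsub⟩ := exists_isMaxOn_isSubgradientOn_add_inner (V := symSubmodule n)
    hKne hKcp hKcv hh0 A b hXs hG_sub
  refine ⟨ys, hys, hmax, fun X hX y hy => ⟨hmax hy, ?_⟩, hG_symm.sub (hAs ys), fun Y hY => ?_⟩
  · have hG_nonneg : 0 ≤ mip G (X - Xs) := (hfo X hX).trans_eq (Matrix.trace_mul_comm _ _)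
    exact (le_add_of_nonneg_right hG_nonneg).trans (hsub X (hS hX))
  · rw [mip_sub_left, ← hAadj (Y - Xs) ((symSubmodule n).sub_mem hY hXs), real_inner_comm]
    exact isSubgradientOn_add_inner_map_sub_iff.1 hsub Y hY

theorem stmt_7 {n m : ℕ} (hn : 2 ≤ n)
    (K : Set (Vec m)) (hKne : K.Nonempty) (hKcp : IsCompact K) (hKcv : Convex ℝ K)
    (h0 : Mat n → ℝ) (hh0 : ConvexOn ℝ (SymM n) h0)
    (gh : Mat n → Mat n) (hgh : ∀ X ∈ SymM n, subdiff h0 X = {gh X})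
    (A : Mat n →ₗ[ℝ] Vec m) (b : Vec m)
    (Aadj : Vec m → Mat n) (hAs : ∀ y : Vec m, (Aadj y).IsSymm)
    (hAadj : ∀ X ∈ SymM n, ∀ y : Vec m, ⟪A X, y⟫ = mip (Aadj y) X)
    (g : Mat n → ℝ)
    (hgdef : ∀ X : Mat n, g X = h0 X + sSup ((fun y => ⟪y, A X - b⟫) '' K))
    (f : Mat n → Vec m → ℝ) (hfdef : ∀ (X : Mat n) (y : Vec m), f X y = h0 X + ⟪y, A X - b⟫)
    (Xs : Mat n) (hXsS : Xs ∈ Spectra n)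
    (hmin : ∀ X ∈ Spectra n, g Xs ≤ g X)
    (G : Mat n) (hG : G ∈ subdiff g Xs)
    (hfo : ∀ X ∈ Spectra n, mip (X - Xs) G ≥ 0) :
    ∃ ys ∈ K, (∀ y ∈ K, f Xs y ≤ f Xs ys) ∧
      (∀ X ∈ Spectra n, ∀ y ∈ K, f Xs y ≤ f Xs ys ∧ f Xs ys ≤ f X ys) ∧
      gh Xs + Aadj ys = G := by
  obtain ⟨ys, hys, hmax, hsaddle, hsub⟩ := stmt_7_general K hKne hKcp hKcv h0 hh0 A b Aadj hAs
    hAadj g hgdef f hfdef (Spectra n) Spectra_subset_SymM Xs (Spectra_subset_SymM hXsS) G hG hfo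
  rw [hgh Xs (Spectra_subset_SymM hXsS), Set.mem_singleton_iff] at hsub
  exact ⟨ys, hys, hmax, hsaddle, by rw [← hsub, sub_add_cancel]⟩
end
end
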